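/- Strong maximum principle: let Ω ⊆ ℝⁿ be an open connected set. (i) If M_a is of class 𝒜_n and u is a nonnegative continuous viscosity supersolution of M_a(D²u) = 0 in Ω that attains its infimum m at some point x₀ ∈ Ω, then u ≡ m in Ω. (ii) If M_a is of class 𝒜_1 and u is a continuous viscosity subsolution of M_a(D²u) = 0 in Ω that attains its supremum M at some point x₀ ∈ Ω, then u ≡ M in Ω. -/

import Mathlib

open Set Metric MeasureTheory Filter

noncomputable section

/-- Euclidean `n`-space `ℝⁿ`. -/
abbrev En (n : ℕ) : Type := EuclideanSpace ℝ (Fin n)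

/-- The eigenvalues of a (symmetric) matrix, arranged in nondecreasing order. -/
noncomputable def sortedEig {n : ℕ} (X : Matrix (Fin n) (Fin n) ℝ) : Fin n → ℝ :=
  if hX : X.IsHermitian then fun i => hX.eigenvalues (Tuple.sort hX.eigenvalues i) else 0

/-- The weighted partial trace operator `M_a(X) = Σ a_i λ_i(X)`. -/
noncomputable def Ma {n : ℕ} (a : Fin n → ℝ) (X : Matrix (Fin n) (Fin n) ℝ) : ℝ :=
  ∑ i, a i * sortedEig X i

/-- The last index of `Fin n`. -/
def lastIdx (n : ℕ) [NeZero n] : Fin n :=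
  ⟨n - 1, Nat.sub_lt (Nat.pos_of_ne_zero (NeZero.ne n)) Nat.one_pos⟩

/-- The class 𝒜̄ : all weights nonnegative, some weight positive. -/
def ClassAbar {n : ℕ} (a : Fin n → ℝ) : Prop := (∀ i, 0 ≤ a i) ∧ ∃ i, 0 < a i

/-- The class 𝒜 : nonnegative weights with `a 1 > 0` and `a n > 0`. -/
def ClassA {n : ℕ} [NeZero n] (a : Fin n → ℝ) : Prop :=
  (∀ i, 0 ≤ a i) ∧ 0 < a 0 ∧ 0 < a (lastIdx n)

/-- The class 𝒜₁ : nonnegative weights with `a 1 > 0`. -/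
def ClassA1 {n : ℕ} [NeZero n] (a : Fin n → ℝ) : Prop := (∀ i, 0 ≤ a i) ∧ 0 < a 0

/-- The class 𝒜ₙ : nonnegative weights with `a n > 0`. -/
def ClassAn {n : ℕ} [NeZero n] (a : Fin n → ℝ) : Prop :=
  (∀ i, 0 ≤ a i) ∧ 0 < a (lastIdx n)

/-- `a* = min (a 1) (a n)`. -/
noncomputable def aStar {n : ℕ} [NeZero n] (a : Fin n → ℝ) : ℝ := min (a 0) (a (lastIdx n))

/-- `â_j = (a 1 + ⋯ + a n) - a j`. -/
noncomputable def hatA {n : ℕ} (a : Fin n → ℝ) (j : Fin n) : ℝ := (∑ i, a i) - a j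

/-- The Hessian matrix of `φ` at `x`. -/
noncomputable def hess {n : ℕ} (φ : En n → ℝ) (x : En n) : Matrix (Fin n) (Fin n) ℝ :=
  fun i j => iteratedFDeriv ℝ 2 φ x ![EuclideanSpace.single i 1, EuclideanSpace.single j 1]

/-- The Hessian matrix of `φ` at `x`, with derivatives taken within `Ω`. -/
noncomputable def hessOn {n : ℕ} (Ω : Set (En n)) (φ : En n → ℝ) (x : En n) :
    Matrix (Fin n) (Fin n) ℝ :=
  fun i j =>
    iteratedFDerivWithin ℝ 2 φ Ω x ![EuclideanSpace.single i 1, EuclideanSpace.single j 1]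

/-- `u` is a viscosity subsolution of `M_a(D²u) = f` in `Ω`. -/
def IsViscSubsol {n : ℕ} (a : Fin n → ℝ) (Ω : Set (En n)) (f u : En n → ℝ) : Prop :=
  ∀ x₀ ∈ Ω, ∀ φ : En n → ℝ, ContDiff ℝ 2 φ →
    IsLocalMaxOn (fun x => u x - φ x) Ω x₀ → f x₀ ≤ Ma a (hess φ x₀)

/-- `u` is a viscosity supersolution of `M_a(D²u) = f` in `Ω`. -/
def IsViscSupersol {n : ℕ} (a : Fin n → ℝ) (Ω : Set (En n)) (f u : En n → ℝ) : Prop :=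
  ∀ x₀ ∈ Ω, ∀ φ : En n → ℝ, ContDiff ℝ 2 φ →
    IsLocalMinOn (fun x => u x - φ x) Ω x₀ → Ma a (hess φ x₀) ≤ f x₀

/-- `u` is a (continuous) viscosity solution of `M_a(D²u) = f` in `Ω`. -/
def IsViscSolution {n : ℕ} (a : Fin n → ℝ) (Ω : Set (En n)) (f u : En n → ℝ) : Prop :=
  ContinuousOn u Ω ∧ IsViscSubsol a Ω f u ∧ IsViscSupersol a Ω f u

/-- The `L^p` norm of `f` on `D`. -/
noncomputable def lpNormOn {n : ℕ} (p : ℝ) (D : Set (En n)) (f : En n → ℝ) : ℝ :=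
  (∫ x in D, |f x| ^ p) ^ (1 / p)

/-- The sup norm of `f` on `D`. -/
noncomputable def supAbsOn {n : ℕ} (D : Set (En n)) (f : En n → ℝ) : ℝ :=
  sSup ((fun x => |f x|) '' D)

/-- The Hölder seminorm `[h]_{β,D}`. -/
noncomputable def holderSemi {n : ℕ} (β : ℝ) (D : Set (En n)) (h : En n → ℝ) : ℝ :=
  sSup {r | ∃ x ∈ D, ∃ y ∈ D, x ≠ y ∧ r = |h x - h y| / ‖x - y‖ ^ β}

/-- The Hölder norm `‖g‖_{C^β(D)} = sup_D |g| + [g]_{β,D}`. -/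
noncomputable def cBetaNorm {n : ℕ} (β : ℝ) (D : Set (En n)) (g : En n → ℝ) : ℝ :=
  supAbsOn D g + holderSemi β D g

/-- `g` is `β`-Hölder continuous on `D`. -/
def HolderOn {n : ℕ} (β : ℝ) (D : Set (En n)) (g : En n → ℝ) : Prop :=
  ∃ K : ℝ, ∀ x ∈ D, ∀ y ∈ D, |g x - g y| ≤ K * ‖x - y‖ ^ β

/-- The `C^{1,β}(D)` norm: `sup|g| + sup|Dg| + [Dg]_{β,D}`. -/
noncomputable def c1BetaNorm {n : ℕ} (β : ℝ) (D : Set (En n)) (g : En n → ℝ) : ℝ :=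
  supAbsOn D g + sSup ((fun x => ‖fderiv ℝ g x‖) '' D) +
    sSup {r | ∃ x ∈ D, ∃ y ∈ D, x ≠ y ∧ r = ‖fderiv ℝ g x - fderiv ℝ g y‖ / ‖x - y‖ ^ β}

/-- `g ∈ C^{1,β}(D)`: differentiable with `β`-Hölder derivative on `D`. -/
def C1HolderOn {n : ℕ} (β : ℝ) (D : Set (En n)) (g : En n → ℝ) : Prop :=
  ContDiff ℝ 1 g ∧ ∃ K : ℝ, ∀ x ∈ D, ∀ y ∈ D,
    ‖fderiv ℝ g x - fderiv ℝ g y‖ ≤ K * ‖x - y‖ ^ β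

/-- Uniform exterior sphere condition with radius `R`: every boundary point lies on the
boundary of a closed ball of radius `R` containing `Ω̄`. -/
def ExtSphere {n : ℕ} (Ω : Set (En n)) (R : ℝ) : Prop :=
  ∀ y ∈ frontier Ω, ∃ z : En n, dist y z = R ∧ closure Ω ⊆ closedBall z R

/-- The cone `Σ_θ = {x : xₙ ≥ |x| cos θ}`. -/
def coneSet (n : ℕ) [NeZero n] (θ : ℝ) : Set (En n) := {x | ‖x‖ * Real.cos θ ≤ x (lastIdx n)}

/-- Uniform exterior cone condition. -/
def ExtCone {n : ℕ} [NeZero n] (Ω : Set (En n)) : Prop :=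
  ∃ θ₀ ∈ Set.Ioo (0 : ℝ) Real.pi, ∃ r₀ > (0 : ℝ), ∀ y ∈ frontier Ω,
    ∃ O : En n ≃ₗᵢ[ℝ] En n,
      closure Ω ∩ ball y r₀ ⊆ (fun x => y + O x) '' coneSet n θ₀

/-- Uniform Lipschitz boundary with Lipschitz constant `L`: near each boundary point, in
suitable rotated coordinates, `Ω` is the region above the graph of an `L`-Lipschitz
function. -/
def LipschitzBoundary {n : ℕ} [NeZero n] (Ω : Set (En n)) (L : ℝ) : Prop :=
  ∃ r₀ > (0 : ℝ), ∀ y ∈ frontier Ω, ∃ O : En n ≃ₗᵢ[ℝ] En n, ∃ ψ : En n → ℝ,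
    LipschitzWith (Real.toNNReal L) ψ ∧
    ∀ x ∈ ball (0 : En n) r₀,
      (y + O x ∈ Ω ↔ ψ (x - EuclideanSpace.single (lastIdx n) (x (lastIdx n))) < x (lastIdx n))

/-- The open cube of edge `ℓ` centered at the origin. -/
def cube (n : ℕ) (ℓ : ℝ) : Set (En n) := {x | ∀ i, |x i| < ℓ / 2}

/-- The upper concave envelope of `u` in `Ω`: the smallest concave function `≥ u` in `Ω`. -/
noncomputable def upperEnvelope {n : ℕ} (Ω : Set (En n)) (u : En n → ℝ) : En n → ℝ :=
  fun x => sInf {t | ∃ φ : En n → ℝ, ConcaveOn ℝ Ω φ ∧ (∀ z ∈ Ω, u z ≤ φ z) ∧ t = φ x}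

/-- The lower convex envelope of `u` in `Ω`: the largest convex function `≤ u` in `Ω`. -/
noncomputable def lowerEnvelope {n : ℕ} (Ω : Set (En n)) (u : En n → ℝ) : En n → ℝ :=
  fun x => sSup {t | ∃ φ : En n → ℝ, ConvexOn ℝ Ω φ ∧ (∀ z ∈ Ω, φ z ≤ u z) ∧ t = φ x}

end

/-!
Hopf's argument. If `u` attains its minimum `m` in `Ω` but is not constant, then some ball in `Ω`
that misses the contact set `{u = m}` touches it. On a slightly larger ball compare `u` with a
multiple of a Gaussian centred at the centre of that ball: for the right multiple the difference has
an interior minimum outside the half ball. The Hessian of `g = exp (-α ‖x‖²)` is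
`2αg (2α x ⊗ x - I)`; away from the centre the rank-one part dominates for large `α`, and since
`a_n > 0` it makes `M_a` of the Hessian positive, contradicting the supersolution property.
Maxima of subsolutions reduce to this by `u ↦ -u`, because `M_a(-X) = -M_{a'}(X)` where `a'` is `a`
in reverse order.
-/

section TouchingBall

variable {E : Type*} [PseudoMetricSpace E] [ProperSpace E]

theorem exists_closedBall_touching_isClosed {Ω F : Set E} (hΩo : IsOpen Ω)
    (hΩc : IsPreconnected Ω) (hF : IsClosed F) (hne : (Ω ∩ F).Nonempty) (hsub : ¬Ω ⊆ F) :
    ∃ y, ∃ z ∈ F, 0 < dist z y ∧ closedBall y (2 * dist z y) ⊆ Ω ∧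
      Disjoint (ball y (dist z y)) F := by
  obtain ⟨b, ⟨hbΩ, hbF⟩, hb⟩ : ∃ b ∈ Ω ∩ F, b ∉ interior F := by
    by_contra! hint
    exact hsub <| (hΩc.subset_of_closure_inter_subset isOpen_interior
      (hne.imp fun b hb => ⟨hb.1, hint b hb⟩)
      fun b hb => hint b ⟨hb.2, closure_minimal interior_subset hF hb.1⟩).trans interior_subset
  rw [← mem_compl_iff, ← closure_compl] at hb
  obtain ⟨R, hR, hRΩ⟩ := nhds_basis_closedBall.mem_iff.1 (hΩo.mem_nhds hbΩ)
  obtain ⟨y, hyF, hby⟩ := Metric.mem_closure_iff.1 hb (R / 3) (by positivity)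
  obtain ⟨z, hzF, hz⟩ := hF.exists_infDist_eq_dist ⟨b, hbF⟩ y
  rw [dist_comm] at hz
  refine ⟨y, z, hzF, hz ▸ (hF.notMem_iff_infDist_pos ⟨b, hbF⟩).1 hyF, ?_,
    hz ▸ disjoint_ball_infDist⟩
  have hzy : dist z y < R / 3 := by
    rw [← hz]
    exact (infDist_le_dist_of_mem hbF).trans_lt (by rwa [dist_comm])
  refine (closedBall_subset_closedBall' ?_).trans hRΩ
  rw [dist_comm y b]
  linarith

theorem exists_isLocalMin_sub_radial {u : E → ℝ} {g : ℝ → ℝ} {y z : E} {r R : ℝ}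
    (hu : LowerSemicontinuousOn u (closedBall y R)) (hmin : ∀ x ∈ closedBall y R, u z ≤ u x)
    (hlt : ∀ x ∈ closedBall y r, u z < u x) (hr : 0 ≤ r) (hzR : dist z y < R)
    (hg : Continuous g) (hg_anti : StrictAntiOn g (Ici 0)) (hg_pos : 0 < g (dist z y)) :
    ∃ ε > 0, ∃ w, r < dist w y ∧ dist w y < R ∧
      IsLocalMin (fun x => u x - ε * g (dist x y)) w := by
  have hrz : r < dist z y := not_le.1 fun h => (hlt z h).false
  have hg_zero : ∀ x, g (dist x y) ≤ g 0 := fun x =>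
    hg_anti.antitoneOn self_mem_Ici dist_nonneg dist_nonneg
  have hg0 : 0 < g 0 := hg_pos.trans_le (hg_zero z)
  obtain ⟨p, hp, hpmin⟩ := LowerSemicontinuousOn.exists_isMinOn (nonempty_closedBall.2 hr)
    (isCompact_closedBall y r) (hu.mono (closedBall_subset_closedBall (hrz.trans hzR).le))
  -- The largest `ε` for which `u - ε g` is at least `u z` on the inner ball.
  set ε := (u p - u z) / g 0
  have hε : 0 < ε := div_pos (sub_pos.2 (hlt p hp)) hg0
  have hεg0 : ε * g 0 = u p - u z := div_mul_cancel₀ _ hg0.ne'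
  have hbarrier : Continuous fun x => -(ε * g (dist x y)) := by fun_prop
  obtain ⟨w, hw, hwmin⟩ := LowerSemicontinuousOn.exists_isMinOn ⟨z, hzR.le⟩
    (isCompact_closedBall y R) (hu.add (hbarrier.lowerSemicontinuous.lowerSemicontinuousOn _))
  simp only [← sub_eq_add_neg] at hwmin
  have hwz : u w - ε * g (dist w y) ≤ u z - ε * g (dist z y) := hwmin hzR.le
  have hwr : r < dist w y := by
    by_contra! hwr
    have hpw : u p ≤ u w := hpmin hwr
    have hgw : ε * g (dist w y) ≤ ε * g 0 := by gcongr; exact hg_zero w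
    linarith [mul_pos hε hg_pos]
  have hwR : dist w y < R := by
    refine (mem_closedBall.1 hw).lt_of_ne fun hwR => ?_
    have hgw : g (dist w y) < g (dist z y) :=
      hg_anti dist_nonneg dist_nonneg (hwR ▸ hzR)
    linarith [hmin w hw, mul_lt_mul_of_pos_left hgw hε]
  exact ⟨ε, hε, w, hwr, hwR, hwmin.isLocalMin (closedBall_mem_nhds_of_mem hwR)⟩

end TouchingBall

section GaussianBump

open scoped RealInnerProductSpace

variable {E : Type*} [NormedAddCommGroup E]

theorem strictAntiOn_exp_neg_mul_sq {α : ℝ} (hα : 0 < α) :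
    StrictAntiOn (fun t : ℝ => Real.exp (-α * t ^ 2)) (Ici 0) := fun s hs t _ hst => by
  have hsq : s ^ 2 < t ^ 2 := pow_lt_pow_left₀ hst hs two_ne_zero
  exact Real.exp_lt_exp.2 (mul_lt_mul_of_neg_left hsq (neg_lt_zero.2 hα))

/-- The Gaussian `x ↦ ε exp (-α ‖x - y‖²)`, used as the barrier in Hopf's comparison argument.
Unlike the power `‖x - y‖ ^ (-α)` it is smooth on the whole space, as test functions have to be. -/
noncomputable def gaussianBump (ε α : ℝ) (y x : E) : ℝ :=
  ε * Real.exp (-α * ‖x - y‖ ^ 2)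

theorem gaussianBump_pos {ε : ℝ} (hε : 0 < ε) (α : ℝ) (y x : E) : 0 < gaussianBump ε α y x :=
  mul_pos hε (Real.exp_pos _)

variable [InnerProductSpace ℝ E]

theorem contDiff_gaussianBump (ε α : ℝ) (y : E) {k : WithTop ℕ∞} :
    ContDiff ℝ k (gaussianBump ε α y) :=
  contDiff_const.mul <| Real.contDiff_exp.comp <|
    contDiff_const.mul <| (contDiff_id.sub contDiff_const).norm_sq ℝ

theorem hasFDerivAt_gaussianBump (ε α : ℝ) (y x : E) :
    HasFDerivAt (gaussianBump ε α y)
      ((-2 * α * gaussianBump ε α y x) • innerSL ℝ (x - y)) x := by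
  have hsq := ((hasFDerivAt_id (𝕜 := ℝ) x).sub_const y).norm_sq
  refine ((hsq.const_mul (-α)).exp.const_mul ε).congr_fderiv ?_
  ext v
  simp only [gaussianBump, id_eq, ContinuousLinearMap.comp_id, smul_apply, innerSL_apply_apply,
    nsmul_eq_mul, smul_eq_mul, Nat.cast_ofNat]
  ring

theorem iteratedFDeriv_two_gaussianBump (ε α : ℝ) (y x : E) (v : Fin 2 → E) :
    iteratedFDeriv ℝ 2 (gaussianBump ε α y) x v =
      gaussianBump ε α y x *
        (4 * α ^ 2 * (⟪x - y, v 0⟫ * ⟪x - y, v 1⟫) - 2 * α * ⟪v 0, v 1⟫) := by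
  have hfderiv : fderiv ℝ (gaussianBump ε α y) =
      fun x => (-2 * α * gaussianBump ε α y x) • innerSL ℝ (x - y) :=
    funext fun x => (hasFDerivAt_gaussianBump ε α y x).fderiv
  have hinner : HasFDerivAt (fun x : E => innerSL ℝ (x - y)) (innerSL ℝ : E →L[ℝ] E →L[ℝ] ℝ) x :=
    (innerSL ℝ).hasFDerivAt.comp x ((hasFDerivAt_id (𝕜 := ℝ) x).sub_const y)
  have hsecond : HasFDerivAt (fun x => (-2 * α * gaussianBump ε α y x) • innerSL ℝ (x - y)) _ x :=
    ((hasFDerivAt_gaussianBump ε α y x).const_mul (-2 * α)).smul hinner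
  rw [iteratedFDeriv_two_apply, hfderiv, hsecond.fderiv]
  have hpair : (innerSL ℝ : E →L[ℝ] E →L[ℝ] ℝ) (v 0) (v 1) = ⟪v 0, v 1⟫ := rfl
  simp only [add_apply, smul_apply, ContinuousLinearMap.smulRight_apply, innerSL_apply_apply,
    smul_eq_mul, hpair]
  ring

end GaussianBump

section SortedEigenvalues

open Polynomial

variable {n : ℕ} {X : Matrix (Fin n) (Fin n) ℝ}

theorem monotone_sortedEig (X : Matrix (Fin n) (Fin n) ℝ) : Monotone (sortedEig X) := by
  unfold sortedEig
  split_ifs with hX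
  · exact Tuple.monotone_sort hX.eigenvalues
  · exact monotone_const

theorem sortedEig_le_lastIdx [NeZero n] (X : Matrix (Fin n) (Fin n) ℝ) (i : Fin n) :
    sortedEig X i ≤ sortedEig X (lastIdx n) :=
  monotone_sortedEig X (Nat.le_sub_one_of_lt i.isLt)

theorem sortedEig_nonneg (hX : X.PosSemidef) (i : Fin n) : 0 ≤ sortedEig X i := by
  rw [sortedEig, dif_pos hX.isHermitian]
  exact hX.eigenvalues_nonneg _

theorem sum_sortedEig (hX : X.IsHermitian) : ∑ i, sortedEig X i = X.trace := by
  rw [hX.trace_eq_sum_eigenvalues, sortedEig, dif_pos hX]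
  exact Equiv.sum_comp (Tuple.sort hX.eigenvalues) hX.eigenvalues

theorem eq_of_monotone_of_prod_X_sub_C_eq {R : Type*} [CommRing R] [IsDomain R] [PartialOrder R]
    {d e : Fin n → R} (hd : Monotone d) (he : Monotone e)
    (h : ∏ i, (Polynomial.X - C (d i)) = ∏ i, (Polynomial.X - C (e i))) : d = e := by
  have hroots (f : Fin n → R) :
      (∏ i, (Polynomial.X - C (f i))).roots = (List.ofFn f : Multiset R) := by
    rw [← Fin.univ_val_map, ← roots_multiset_prod_X_sub_C (Multiset.map f _), Multiset.map_map]
    rfl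
  have hperm : (List.ofFn d).Perm (List.ofFn e) := by
    rw [← Multiset.coe_eq_coe, ← hroots, ← hroots, h]
  exact List.ofFn_injective <|
    hperm.eq_of_pairwise' hd.sortedLE_ofFn.pairwise he.sortedLE_ofFn.pairwise

theorem charpoly_cfc_eq_prod_sortedEig (hX : X.IsHermitian) (f : ℝ → ℝ) :
    (cfc f X).charpoly = ∏ i, (Polynomial.X - C (f (sortedEig X i))) := by
  rw [hX.charpoly_cfc_eq, sortedEig, dif_pos hX]
  exact (Equiv.prod_comp (Tuple.sort hX.eigenvalues)
    fun i => Polynomial.X - C (f (hX.eigenvalues i))).symm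

theorem sortedEig_eq_of_charpoly_eq_prod (hX : X.IsHermitian) {d : Fin n → ℝ} (hd : Monotone d)
    (h : X.charpoly = ∏ i, (Polynomial.X - C (d i))) : sortedEig X = d :=
  eq_of_monotone_of_prod_X_sub_C_eq (monotone_sortedEig X) hd <| by
    rw [← charpoly_cfc_eq_prod_sortedEig hX fun t => t, cfc_id' ℝ X, h]

theorem sortedEig_cfc_of_monotone (hX : X.IsHermitian) {f : ℝ → ℝ} (hf : Monotone f) :
    sortedEig (cfc f X) = f ∘ sortedEig X :=
  sortedEig_eq_of_charpoly_eq_prod (cfc_predicate f X) (hf.comp (monotone_sortedEig X))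
    (charpoly_cfc_eq_prod_sortedEig hX f)

theorem sortedEig_cfc_of_antitone (hX : X.IsHermitian) {f : ℝ → ℝ} (hf : Antitone f) :
    sortedEig (cfc f X) = f ∘ sortedEig X ∘ Fin.rev := by
  refine sortedEig_eq_of_charpoly_eq_prod (cfc_predicate f X)
    (hf.comp ((monotone_sortedEig X).comp_antitone Fin.rev_anti)) ?_
  rw [charpoly_cfc_eq_prod_sortedEig hX]
  exact (Equiv.prod_comp Fin.revPerm fun i => Polynomial.X - C (f (sortedEig X i))).symm

theorem sortedEig_sub_smul_one (hX : X.IsHermitian) (c : ℝ) (i : Fin n) :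
    sortedEig (X - c • 1) i = sortedEig X i - c := by
  have hcfc : cfc (fun t => t - c) X = X - c • 1 := by
    rw [cfc_sub (fun t => t) (fun _ => c) X, cfc_id' ℝ X, cfc_const c X,
      Algebra.algebraMap_eq_smul_one]
  rw [← hcfc, sortedEig_cfc_of_monotone hX fun _ _ h => sub_le_sub_right h c]
  rfl

theorem sortedEig_neg (X : Matrix (Fin n) (Fin n) ℝ) (i : Fin n) :
    sortedEig (-X) i = -sortedEig X i.rev := by
  by_cases hX : X.IsHermitian
  · rw [← cfc_neg_id (R := ℝ) (a := X), sortedEig_cfc_of_antitone hX fun _ _ => neg_le_neg]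
    rfl
  · rw [sortedEig, sortedEig, dif_neg hX, dif_neg (Matrix.isHermitian_neg_iff.not.2 hX)]
    simp

end SortedEigenvalues

section PartialTrace

variable {n : ℕ} {a : Fin n → ℝ} {X : Matrix (Fin n) (Fin n) ℝ}

theorem Ma_neg (a : Fin n → ℝ) (X : Matrix (Fin n) (Fin n) ℝ) :
    Ma a (-X) = -Ma (a ∘ Fin.rev) X := by
  simp only [Ma, sortedEig_neg, mul_neg, Finset.sum_neg_distrib, Function.comp_apply]
  congr 1
  simpa using Equiv.sum_comp Fin.revPerm fun i => a i.rev * sortedEig X i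

theorem Ma_sub_smul_one (a : Fin n → ℝ) (hX : X.IsHermitian) (c : ℝ) :
    Ma a (X - c • 1) = Ma a X - c * ∑ i, a i := by
  simp only [Ma, sortedEig_sub_smul_one hX, mul_sub, Finset.sum_sub_distrib, ← Finset.sum_mul,
    mul_comm c]

theorem lastIdx_mul_trace_le_mul_Ma [NeZero n] (ha : ∀ i, 0 ≤ a i) (hX : X.PosSemidef) :
    a (lastIdx n) * X.trace ≤ n * Ma a X := by
  have htrace : X.trace ≤ n * sortedEig X (lastIdx n) := by
    rw [← sum_sortedEig hX.isHermitian]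
    simpa using Finset.sum_le_card_nsmul Finset.univ _ _ fun i _ => sortedEig_le_lastIdx X i
  have hMa : a (lastIdx n) * sortedEig X (lastIdx n) ≤ Ma a X :=
    Finset.single_le_sum (f := fun i => a i * sortedEig X i)
      (fun i _ => mul_nonneg (ha i) (sortedEig_nonneg hX i)) (Finset.mem_univ _)
  calc a (lastIdx n) * X.trace
      ≤ a (lastIdx n) * (n * sortedEig X (lastIdx n)) := by gcongr; exact ha _
    _ = n * (a (lastIdx n) * sortedEig X (lastIdx n)) := by ring
    _ ≤ n * Ma a X := by gcongr

theorem ClassA1.comp_rev [NeZero n] (ha : ClassA1 a) : ClassAn (a ∘ Fin.rev) := by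
  have hrev : (lastIdx n).rev = 0 := by
    ext
    simp only [lastIdx, Fin.val_rev, Fin.val_zero]
    have := NeZero.pos n
    omega
  exact ⟨fun i => ha.1 i.rev, by simpa only [Function.comp_apply, hrev] using ha.2⟩

end PartialTrace

section Viscosity

variable {n : ℕ} {a : Fin n → ℝ} {Ω : Set (En n)} {u : En n → ℝ}

theorem hess_neg (φ : En n → ℝ) (x : En n) : hess (-φ) x = -hess φ x := by
  ext i j
  simp [hess, iteratedFDeriv_neg_apply]

theorem hess_gaussianBump (ε α : ℝ) (y x : En n) :
    hess (gaussianBump ε α y) x =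
      (4 * α ^ 2 * gaussianBump ε α y x) • Matrix.vecMulVec (x - y).ofLp (x - y).ofLp -
        (2 * α * gaussianBump ε α y x) • 1 := by
  ext i j
  have hcoord (k : Fin n) : inner ℝ (x - y) (EuclideanSpace.single k 1) = (x - y).ofLp k := by
    simp [EuclideanSpace.inner_single_right]
  have hsingle : inner ℝ (EuclideanSpace.single i (1 : ℝ)) (EuclideanSpace.single j 1) =
      (1 : Matrix (Fin n) (Fin n) ℝ) i j := by
    simp [EuclideanSpace.inner_single_right, Matrix.one_apply, eq_comm]
  simp only [hess, iteratedFDeriv_two_gaussianBump, Matrix.cons_val_zero, Matrix.cons_val_one,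
    hcoord, hsingle, Matrix.sub_apply, Matrix.smul_apply, Matrix.vecMulVec_apply, smul_eq_mul]
  ring

theorem Ma_hess_gaussianBump_pos [NeZero n] (ha : ClassAn a) {ε α : ℝ} (hε : 0 < ε)
    (hα : 0 < α) {x y : En n}
    (h : n * ∑ i, a i < 2 * α * ‖x - y‖ ^ 2 * a (lastIdx n)) :
    0 < Ma a (hess (gaussianBump ε α y) x) := by
  have hg := gaussianBump_pos hε α y x
  have hn : (0 : ℝ) < n := by exact_mod_cast NeZero.pos n
  set g := gaussianBump ε α y x
  set v := (x - y).ofLp with hv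
  have hpsd : ((4 * α ^ 2 * g) • Matrix.vecMulVec v v).PosSemidef :=
    (Matrix.posSemidef_vecMulVec_self_star v).smul (by positivity)
  have htrace : ((4 * α ^ 2 * g) • Matrix.vecMulVec v v).trace = 4 * α ^ 2 * g * ‖x - y‖ ^ 2 := by
    rw [Matrix.trace_smul, Matrix.trace_vecMulVec, EuclideanSpace.norm_sq_eq]
    simp [dotProduct, hv, sq]
  have hMa := lastIdx_mul_trace_le_mul_Ma ha.1 hpsd
  rw [htrace] at hMa
  rw [hess_gaussianBump, Ma_sub_smul_one a hpsd.isHermitian, sub_pos]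
  refine lt_of_mul_lt_mul_left ?_ hn.le
  calc n * (2 * α * g * ∑ i, a i)
      = 2 * α * g * (n * ∑ i, a i) := by ring
    _ < 2 * α * g * (2 * α * ‖x - y‖ ^ 2 * a (lastIdx n)) := by gcongr
    _ = a (lastIdx n) * (4 * α ^ 2 * g * ‖x - y‖ ^ 2) := by ring
    _ ≤ _ := hMa

theorem IsViscSubsol.neg {f : En n → ℝ} (hu : IsViscSubsol a Ω f u) :
    IsViscSupersol (a ∘ Fin.rev) Ω (-f) (-u) := by
  intro x hx φ hφ hmin
  have hmax : IsLocalMaxOn (fun x => u x - (-φ) x) Ω x := by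
    simpa [neg_sub, add_comm, ← sub_eq_add_neg] using hmin.neg
  have hMa := hu x hx (-φ) hφ.neg hmax
  rw [hess_neg, Ma_neg] at hMa
  exact le_neg_of_le_neg hMa

theorem IsViscSupersol.exists_mem_closedBall_le [NeZero n]
    (hsup : IsViscSupersol a Ω (fun _ => 0) u) (ha : ClassAn a) {y z : En n} {r R : ℝ}
    (hball : closedBall y R ⊆ Ω) (hu : LowerSemicontinuousOn u (closedBall y R))
    (hmin : ∀ x ∈ closedBall y R, u z ≤ u x) (hr : 0 < r) (hzR : dist z y < R) :
    ∃ x ∈ closedBall y r, u x ≤ u z := by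
  have han := ha.2
  have hsum : 0 ≤ ∑ i, a i := Finset.sum_nonneg fun i _ => ha.1 i
  obtain ⟨α, hα⟩ := exists_gt (n * (∑ i, a i) / (2 * r ^ 2 * a (lastIdx n)))
  have hα0 : 0 < α := hα.trans_le' (by positivity)
  rw [div_lt_iff₀ (by positivity)] at hα
  by_contra! hlt
  obtain ⟨ε, hε, w, hrw, hwR, hw⟩ :=
    exists_isLocalMin_sub_radial (g := fun t => Real.exp (-α * t ^ 2)) hu hmin hlt hr.le hzR
      (by fun_prop) (strictAntiOn_exp_neg_mul_sq hα0) (Real.exp_pos _)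
  have hwΩ : w ∈ Ω := hball hwR.le
  rw [dist_eq_norm] at hrw
  have hw_bump : IsLocalMin (fun x => u x - gaussianBump ε α y x) w := by
    simpa only [gaussianBump, ← dist_eq_norm] using hw
  refine (hsup w hwΩ _ (contDiff_gaussianBump ε α y) (hw_bump.on Ω)).not_gt
    (Ma_hess_gaussianBump_pos ha hε hα0 ?_)
  calc n * ∑ i, a i < α * (2 * r ^ 2 * a (lastIdx n)) := hα
    _ ≤ α * (2 * ‖w - y‖ ^ 2 * a (lastIdx n)) := by gcongr
    _ = 2 * α * ‖w - y‖ ^ 2 * a (lastIdx n) := by ring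

theorem IsViscSupersol.eq_of_forall_le [NeZero n] (hsup : IsViscSupersol a Ω (fun _ => 0) u)
    (ha : ClassAn a) (hΩo : IsOpen Ω) (hΩc : IsPreconnected Ω)
    (hu : LowerSemicontinuousOn u Ω) {x₀ : En n} (hx₀ : x₀ ∈ Ω) (hmin : ∀ x ∈ Ω, u x₀ ≤ u x) :
    ∀ x ∈ Ω, u x = u x₀ := by
  obtain ⟨F, hF, hFu⟩ := lowerSemicontinuousOn_iff_preimage_Iic.1 hu (u x₀)
  have hmemF {x} (hx : x ∈ Ω) : x ∈ F ↔ u x ≤ u x₀ := by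
    simpa [hx] using (Set.ext_iff.1 hFu x).symm
  suffices hΩF : Ω ⊆ F from fun x hx => ((hmemF hx).1 (hΩF hx)).antisymm (hmin x hx)
  by_contra hΩF
  obtain ⟨y, z, hzF, hzy, hball, hdisj⟩ := exists_closedBall_touching_isClosed hΩo hΩc hF
    ⟨x₀, hx₀, (hmemF hx₀).2 le_rfl⟩ hΩF
  have hzR : dist z y < 2 * dist z y := by linarith
  have hz : u z ≤ u x₀ := (hmemF (hball hzR.le)).1 hzF
  obtain ⟨x, hx, hxz⟩ := hsup.exists_mem_closedBall_le ha hball (hu.mono hball)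
    (fun x hx => hz.trans (hmin x (hball hx))) (half_pos hzy) hzR
  have hxΩ : x ∈ Ω := hball (closedBall_subset_closedBall (by linarith) hx)
  have hxball : x ∈ ball y (dist z y) := closedBall_subset_ball (half_lt_self hzy) hx
  exact hdisj.notMem_of_mem_left hxball ((hmemF hxΩ).2 (hxz.trans hz))

end Viscosity

theorem strong_maximum_principle_general (n : ℕ) [NeZero n] (a : Fin n → ℝ)
    (Ω : Set (En n)) (hΩo : IsOpen Ω) (hΩc : IsPreconnected Ω) :
    (ClassAn a →
      ∀ u : En n → ℝ, LowerSemicontinuousOn u Ω →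
        IsViscSupersol a Ω (fun _ => 0) u →
        ∀ x₀ ∈ Ω, (∀ x ∈ Ω, u x₀ ≤ u x) → ∀ x ∈ Ω, u x = u x₀) ∧
    (ClassA1 a →
      ∀ u : En n → ℝ, UpperSemicontinuousOn u Ω →
        IsViscSubsol a Ω (fun _ => 0) u →
        ∀ x₀ ∈ Ω, (∀ x ∈ Ω, u x ≤ u x₀) → ∀ x ∈ Ω, u x = u x₀) := by
  refine ⟨fun ha u hu hsup x₀ hx₀ hmin => hsup.eq_of_forall_le ha hΩo hΩc hu hx₀ hmin,
    fun ha u hu hsub x₀ hx₀ hmax x hx => neg_injective ?_⟩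
  have hsup : IsViscSupersol (a ∘ Fin.rev) Ω (fun _ => 0) (-u) := by
    simpa only [Pi.neg_def, neg_zero] using hsub.neg
  have hlsc : LowerSemicontinuousOn (-u) Ω := fun y hy c hc =>
    (hu y hy (-c) (lt_neg_of_lt_neg hc)).mono fun _ => lt_neg_of_lt_neg
  exact hsup.eq_of_forall_le ha.comp_rev hΩo hΩc hlsc hx₀ (fun x hx => neg_le_neg (hmax x hx)) x hx

/-- **Strong maximum principle (Theorem 6.2).** Let `Ω ⊆ ℝⁿ` be open and connected.
(i) If `M_a ∈ 𝒜ₙ` and `u` is a nonnegative continuous viscosity supersolution of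
`M_a(D²u) = 0` in `Ω` attaining its infimum `m` at some `x₀ ∈ Ω`, then `u ≡ m` in `Ω`.
(ii) If `M_a ∈ 𝒜₁` and `u` is a continuous viscosity subsolution attaining its supremum
`M` at some `x₀ ∈ Ω`, then `u ≡ M` in `Ω`. -/
theorem strong_maximum_principle (n : ℕ) [NeZero n] (a : Fin n → ℝ)
    (Ω : Set (En n)) (hΩo : IsOpen Ω) (hΩc : IsConnected Ω) :
    (ClassAn a →
      ∀ u : En n → ℝ, ContinuousOn u Ω → (∀ x ∈ Ω, 0 ≤ u x) →
        IsViscSupersol a Ω (fun _ => 0) u →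
        ∀ x₀ ∈ Ω, (∀ x ∈ Ω, u x₀ ≤ u x) → ∀ x ∈ Ω, u x = u x₀) ∧
    (ClassA1 a →
      ∀ u : En n → ℝ, ContinuousOn u Ω →
        IsViscSubsol a Ω (fun _ => 0) u →
        ∀ x₀ ∈ Ω, (∀ x ∈ Ω, u x ≤ u x₀) → ∀ x ∈ Ω, u x = u x₀) := by
  have H := strong_maximum_principle_general n a Ω hΩo hΩc.isPreconnected
  exact ⟨fun ha u hu _ => H.1 ha u hu.lowerSemicontinuousOn,
    fun ha u hu => H.2 ha u hu.upperSemicontinuousOn⟩
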